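/- Let a > 2 and b ≥ 1. The hook partition (a, 1^b) is a maximal element in the standard immersion poset on partitions of a+b if and only if b ≤ 2. -/

import Mathlib

open Finset MvPolynomial

/-- A partition of `n`, represented as a weakly decreasing list of positive
integers summing to `n`. -/
def IsPartitionOf (n : ℕ) (l : List ℕ) : Prop :=
  l.Pairwise (· ≥ ·) ∧ (∀ x ∈ l, 0 < x) ∧ l.sum = n

/-- `T : ℕ → ℕ → ℕ` is a semistandard Young tableau of shape `l`
(rows weakly increase, columns strictly increase, entries are `0` outside
of the diagram; entries are 0-indexed, so entry value `k` stands for the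
letter `k+1`). -/
def IsSSYT (l : List ℕ) (T : ℕ → ℕ → ℕ) : Prop :=
  (∀ i j1 j2, j1 ≤ j2 → j2 < l.getD i 0 → T i j1 ≤ T i j2) ∧
  (∀ i1 i2 j, i1 < i2 → j < l.getD i2 0 → T i1 j < T i2 j) ∧
  (∀ i j, l.getD i 0 ≤ j → T i j = 0)

/-- The tableau `T` of shape `l` has content `ν`: for every `k`, the number of
cells of the diagram of `l` whose entry is `k` equals the `(k+1)`-st part of `ν`. -/
def HasContent (l : List ℕ) (T : ℕ → ℕ → ℕ) (ν : List ℕ) : Prop :=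
  ∀ k, Nat.card {c : ℕ × ℕ // c.2 < l.getD c.1 0 ∧ T c.1 c.2 = k} = ν.getD k 0

/-- The Kostka number `K_{l,ν}`: the number of semistandard Young tableaux of
shape `l` and content `ν`. -/
noncomputable def kostka (l ν : List ℕ) : ℕ :=
  Nat.card {T : ℕ → ℕ → ℕ // IsSSYT l T ∧ HasContent l T ν}

/-- `f^λ`, the number of standard Young tableaux of shape `l`. -/
noncomputable def fSYT (l : List ℕ) : ℕ := kostka l (List.replicate l.sum 1)

/-- Dominance order: all partial sums of `l` are at most those of `m`. -/
def DomLE (l m : List ℕ) : Prop := ∀ k, (l.take k).sum ≤ (m.take k).sum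

/-- The standard immersion order: dominance together with `f^λ ≤ f^μ`. -/
def StdLE (l m : List ℕ) : Prop := DomLE l m ∧ fSYT l ≤ fSYT m

/-- Strict standard immersion order. -/
def StdLT (l m : List ℕ) : Prop := StdLE l m ∧ l ≠ m

/-- `m` covers `l` in the standard immersion poset on partitions of `n`. -/
def StdCovBy (n : ℕ) (l m : List ℕ) : Prop :=
  StdLT l m ∧ ∀ ν, IsPartitionOf n ν → StdLT l ν → ¬ StdLT ν m

/-- `l` is a maximal element of the standard immersion poset on partitions of `n`. -/
def StdMaximal (n : ℕ) (l : List ℕ) : Prop :=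
  ∀ m, IsPartitionOf n m → m ≠ l → ¬ StdLE l m

/-- The immersion order on partitions of `n`: `l ≤_I m` iff
`K_{l,α} ≤ K_{m,α}` for every partition `α` of `n`. -/
def ImmersionLE (n : ℕ) (l m : List ℕ) : Prop :=
  ∀ ν, IsPartitionOf n ν → kostka l ν ≤ kostka m ν

/-- Strict immersion order. -/
def ImmersionLT (n : ℕ) (l m : List ℕ) : Prop := ImmersionLE n l m ∧ l ≠ m

/-- `m` covers `l` in the immersion poset on partitions of `n`. -/
def ImmersionCovBy (n : ℕ) (l m : List ℕ) : Prop :=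
  ImmersionLT n l m ∧ ∀ ν, IsPartitionOf n ν → ImmersionLT n l ν → ¬ ImmersionLT n ν m

/-!
Deleting the largest entry of a standard tableau gives the branching rule
`f^λ = ∑ f^μ`, summed over the `μ` obtained from `λ` by removing a corner. It yields
`f^{(a,1^b)} = (a + b - 1).choose b`, and applying it to `(a,1^{b+2})` and `(a,2,1^b)`, whose
recursions in `a` can be compared term by term, gives `f^{(a,1^{b+2})} ≤ f^{(a,2,1^b)}` for
`b ≥ 1`. As `(a,2,1^b)` dominates `(a,1^{b+2})`, the hook is then not maximal. When `b ≤ 2`, the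
only partitions dominating `(a,1^b)` are hooks with a shorter leg and, for `b = 2`, `(a,2)`; both
kinds have strictly fewer tableaux.
-/

/-- The cells of the Young diagram with row lengths `l`, as pairs `(row, column)`. -/
def cells (l : List ℕ) : Set (ℕ × ℕ) := {c | c.2 < l.getD c.1 0}

/-- Standard Young tableaux of shape `l`: the semistandard ones in which each of the letters
`0, …, l.sum - 1` occurs exactly once. -/
def IsSYT (l : List ℕ) (T : ℕ → ℕ → ℕ) : Prop :=
  IsSSYT l T ∧ Set.BijOn (Function.uncurry T) (cells l) (Set.Iio l.sum)

theorem mem_cells {l : List ℕ} {i j : ℕ} : (i, j) ∈ cells l ↔ j < l.getD i 0 := Iff.rfl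

theorem finite_cells (l : List ℕ) : (cells l).Finite := by
  refine ((Set.finite_Iio l.length).prod (Set.finite_Iio (l.sum + 1))).subset ?_
  rintro ⟨i, j⟩ hij
  rw [mem_cells] at hij
  have hi : i < l.length := by
    by_contra hi
    rw [List.getD_eq_default _ _ (not_lt.mp hi)] at hij
    exact absurd hij (Nat.not_lt_zero j)
  rw [List.getD_eq_getElem _ _ hi] at hij
  exact ⟨hi, (hij.trans_le (List.le_sum_of_mem (List.getElem_mem hi))).trans (Nat.lt_succ_self _)⟩

theorem getD_replicate_zero (n x i : ℕ) :
    (List.replicate n x).getD i 0 = if i < n then x else 0 := by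
  split_ifs with h
  · exact List.getD_replicate _ h
  · exact List.getD_eq_default _ _ (by simpa using h)

theorem hasContent_replicate_one_iff {l : List ℕ} {T : ℕ → ℕ → ℕ} {n : ℕ} :
    HasContent l T (List.replicate n 1) ↔
      Set.BijOn (Function.uncurry T) (cells l) (Set.Iio n) := by
  have finite_fiber (k : ℕ) : Finite {c : ℕ × ℕ // c.2 < l.getD c.1 0 ∧ T c.1 c.2 = k} :=
    (finite_cells l).subset fun _ hc ↦ hc.1
  simp only [HasContent, getD_replicate_zero]
  constructor
  · intro h
    refine ⟨fun c hc ↦ ?_, fun c hc d hd hcd ↦ ?_, fun k hk ↦ ?_⟩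
    · by_contra hlt
      have hempty := h (T c.1 c.2)
      rw [if_neg (by exact hlt), Finite.card_eq_zero_iff] at hempty
      exact hempty.elim ⟨c, hc, rfl⟩
    · have hle : Nat.card {e : ℕ × ℕ // e.2 < l.getD e.1 0 ∧ T e.1 e.2 = T d.1 d.2} ≤ 1 := by
        rw [h]; split_ifs <;> simp
      rw [Finite.card_le_one_iff_subsingleton] at hle
      exact congrArg Subtype.val (hle.elim ⟨c, hc, hcd⟩ ⟨d, hd, rfl⟩)
    · have hone := h k
      rw [if_pos (by exact hk), Nat.card_eq_one_iff_exists] at hone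
      obtain ⟨⟨c, hc, hck⟩, -⟩ := hone
      exact ⟨c, hc, hck⟩
  · intro h k
    split_ifs with hk
    · obtain ⟨c, hc, hck⟩ := h.surjOn hk
      exact Nat.card_eq_one_iff_exists.mpr
        ⟨⟨c, hc, hck⟩, fun d ↦ Subtype.ext (h.injOn d.2.1 hc (d.2.2.trans hck.symm))⟩
    · have : IsEmpty {c : ℕ × ℕ // c.2 < l.getD c.1 0 ∧ T c.1 c.2 = k} :=
        ⟨fun c ↦ hk (c.2.2 ▸ h.mapsTo c.2.1)⟩
      exact Nat.card_of_isEmpty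

theorem fSYT_eq_card (l : List ℕ) : fSYT l = Nat.card {T : ℕ → ℕ → ℕ // IsSYT l T} := by
  simp only [fSYT, kostka, IsSYT, hasContent_replicate_one_iff]

theorem finite_isSYT (l : List ℕ) : Finite {T : ℕ → ℕ → ℕ // IsSYT l T} := by
  have : Finite (cells l) := finite_cells l
  refine Finite.of_injective (β := cells l → Set.Iio l.sum)
    (fun T c ↦ ⟨T.1 c.1.1 c.1.2, T.2.2.mapsTo c.2⟩) ?_
  rintro ⟨T, hT⟩ ⟨S, hS⟩ h
  ext i j
  by_cases hij : j < l.getD i 0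
  · exact congrArg Subtype.val (congrFun h ⟨(i, j), hij⟩)
  · exact (hT.1.2.2 i j (not_lt.mp hij)).trans (hS.1.2.2 i j (not_lt.mp hij)).symm

/-- The last cell of row `i` is a removable corner of the Young diagram `l`. -/
def IsCornerRow (l : List ℕ) (i : ℕ) : Prop := l.getD (i + 1) 0 < l.getD i 0

/-- The diagram obtained from `l` by deleting the last cell of row `i`; a row of length `1` becomes
an explicit part `0`. -/
def removeBox (l : List ℕ) (i : ℕ) : List ℕ := l.set i (l.getD i 0 - 1)

/-- The filling obtained from `T` by writing `v` into the cell `(i, j)`. -/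
def setEntry (T : ℕ → ℕ → ℕ) (i j v : ℕ) : ℕ → ℕ → ℕ :=
  fun i' j' ↦ if i' = i ∧ j' = j then v else T i' j'

theorem setEntry_self (T : ℕ → ℕ → ℕ) (i j v : ℕ) : setEntry T i j v i j = v :=
  if_pos ⟨rfl, rfl⟩

theorem setEntry_setEntry (T : ℕ → ℕ → ℕ) (i j v w : ℕ) :
    setEntry (setEntry T i j v) i j w = setEntry T i j w := by
  ext i' j'
  simp only [setEntry]
  split_ifs <;> rfl

theorem setEntry_eq_self (T : ℕ → ℕ → ℕ) (i j : ℕ) : setEntry T i j (T i j) = T := by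
  ext i' j'
  simp only [setEntry]
  split_ifs with h
  · rw [h.1, h.2]
  · rfl

theorem eq_of_setEntry_eq_setEntry {T T' : ℕ → ℕ → ℕ} {i j v : ℕ} (hij : T i j = T' i j)
    (h : setEntry T i j v = setEntry T' i j v) : T = T' := by
  rw [← setEntry_eq_self T i j, ← setEntry_setEntry T i j v, h, setEntry_setEntry, hij,
    setEntry_eq_self]

theorem getD_removeBox (l : List ℕ) (i k : ℕ) :
    (removeBox l i).getD k 0 = if k = i then l.getD i 0 - 1 else l.getD k 0 := by
  simp only [removeBox, List.getD_eq_getElem?_getD, List.getElem?_set]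
  grind

theorem sum_removeBox_add_one {l : List ℕ} {i : ℕ} (h : 0 < l.getD i 0) :
    (removeBox l i).sum + 1 = l.sum := by
  induction l generalizing i with
  | nil => simp at h
  | cons x l ih =>
    cases i with
    | zero =>
      simp only [List.getD_cons_zero] at h
      simp only [removeBox, List.getD_cons_zero, List.set_cons_zero, List.sum_cons]
      omega
    | succ i => simpa [removeBox, add_assoc] using ih (i := i) (by simpa using h)

theorem cells_eq_insert_cells_removeBox {l : List ℕ} {i j : ℕ} (hj : l.getD i 0 = j + 1) :
    cells l = insert (i, j) (cells (removeBox l i)) := by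
  ext ⟨i', j'⟩
  simp only [Set.mem_insert_iff, mem_cells, getD_removeBox, Prod.mk.injEq]
  grind

theorem notMem_cells_removeBox {l : List ℕ} {i j : ℕ} (hj : l.getD i 0 = j + 1) :
    (i, j) ∉ cells (removeBox l i) := by
  rw [mem_cells, getD_removeBox, if_pos rfl, hj]
  omega

theorem bijOn_setEntry_iff {l : List ℕ} {i j : ℕ} (hj : l.getD i 0 = j + 1) (T : ℕ → ℕ → ℕ)
    (n : ℕ) :
    Set.BijOn (Function.uncurry (setEntry T i j n)) (cells l) (Set.Iio (n + 1)) ↔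
      Set.BijOn (Function.uncurry T) (cells (removeBox l i)) (Set.Iio n) := by
  have heq : Set.EqOn (Function.uncurry (setEntry T i j n)) (Function.uncurry T)
      (cells (removeBox l i)) := by
    rintro ⟨i', j'⟩ hc
    refine if_neg ?_
    rintro ⟨rfl, rfl⟩
    exact notMem_cells_removeBox hj hc
  have hIio : Set.Iio (n + 1) =
      insert (Function.uncurry (setEntry T i j n) (i, j)) (Set.Iio n) := by
    rw [Function.uncurry_apply_pair, setEntry_self, Set.Iio_insert]
    exact Order.Iio_succ n
  rw [cells_eq_insert_cells_removeBox hj, hIio,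
    Set.BijOn.insert_iff (notMem_cells_removeBox hj) (by simp [setEntry_self]), heq.bijOn_iff]

theorem getD_le_getD_of_pairwise_ge {l : List ℕ} (hl : l.Pairwise (· ≥ ·)) {i j : ℕ}
    (hij : i ≤ j) : l.getD j 0 ≤ l.getD i 0 := by
  by_cases hj : j < l.length
  · rw [List.getD_eq_getElem _ _ hj, List.getD_eq_getElem _ _ (hij.trans_lt hj)]
    exact hl.sortedGE.antitone_get (a := ⟨i, hij.trans_lt hj⟩) (b := ⟨j, hj⟩) hij
  · rw [List.getD_eq_default _ _ (not_lt.mp hj)]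
    exact Nat.zero_le _

theorem isSSYT_setEntry_iff {l : List ℕ} (hl : l.Pairwise (· ≥ ·)) {i j n : ℕ}
    (hi : IsCornerRow l i) (hj : l.getD i 0 = j + 1) {T : ℕ → ℕ → ℕ} (hT : T i j = 0)
    (hlt : Set.MapsTo (Function.uncurry T) (cells (removeBox l i)) (Set.Iio n)) :
    IsSSYT l (setEntry T i j n) ↔ IsSSYT (removeBox l i) T := by
  have anti {i₁ i₂ : ℕ} (h : i₁ ≤ i₂) := getD_le_getD_of_pairwise_ge hl h
  have hlt' (i' j' : ℕ) (h : j' < (removeBox l i).getD i' 0) : T i' j' < n :=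
    hlt (mem_cells.mpr h)
  have below (i' : ℕ) (h : i < i') : l.getD i' 0 ≤ j := by
    have := anti (i₁ := i + 1) (i₂ := i') h
    unfold IsCornerRow at hi
    omega
  simp only [getD_removeBox] at hlt'
  simp only [IsSSYT, setEntry, getD_removeBox]
  constructor
  · rintro ⟨hrow, hcol, hout⟩
    refine ⟨fun i' j₁ j₂ hj₁₂ h ↦ ?_, fun i₁ i₂ j' hi₁₂ h ↦ ?_, fun i' j' h ↦ ?_⟩
    · have := hrow i' j₁ j₂ hj₁₂
      grind
    · have := hcol i₁ i₂ j' hi₁₂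
      grind
    · have := hout i' j'
      grind
  · rintro ⟨hrow, hcol, hout⟩
    refine ⟨fun i' j₁ j₂ hj₁₂ h ↦ ?_, fun i₁ i₂ j' hi₁₂ h ↦ ?_, fun i' j' h ↦ ?_⟩
    · have := hrow i' j₁ j₂ hj₁₂
      have := hlt' i' j₁
      grind
    · have := hcol i₁ i₂ j' hi₁₂
      have := hlt' i₁ j'
      have := anti hi₁₂.le
      grind
    · have := hout i' j'
      grind

theorem isSYT_setEntry_iff {l : List ℕ} (hl : l.Pairwise (· ≥ ·)) {i j n : ℕ}
    (hi : IsCornerRow l i) (hj : l.getD i 0 = j + 1) (hn : l.sum = n + 1)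
    {T : ℕ → ℕ → ℕ} (hT : T i j = 0) :
    IsSYT l (setEntry T i j n) ↔ IsSYT (removeBox l i) T := by
  have hsum : (removeBox l i).sum = n := by
    have := sum_removeBox_add_one (l := l) (i := i) (by omega)
    omega
  rw [IsSYT, IsSYT, hn, hsum, bijOn_setEntry_iff hj]
  exact and_congr_left fun hbij ↦ isSSYT_setEntry_iff hl hi hj hT hbij.mapsTo

theorem IsSYT.exists_isCornerRow {l : List ℕ} {T : ℕ → ℕ → ℕ} (hT : IsSYT l T) {n : ℕ}
    (hn : l.sum = n + 1) : ∃ i j, IsCornerRow l i ∧ l.getD i 0 = j + 1 ∧ T i j = n := by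
  have hle {i j : ℕ} (h : j < l.getD i 0) : T i j ≤ n :=
    Nat.lt_succ_iff.mp ((hT.2.mapsTo (mem_cells.mpr h)).trans_eq hn)
  obtain ⟨⟨i, j⟩, hij, hTij : T i j = n⟩ := hT.2.surjOn (show n ∈ Set.Iio l.sum by simp [hn])
  rw [mem_cells] at hij
  have hlast : l.getD i 0 ≤ j + 1 := by
    by_contra! hlt
    have heq : T i j = T i (j + 1) :=
      (hT.1.1 i j (j + 1) j.le_succ hlt).antisymm ((hle hlt).trans hTij.ge)
    have hcell := hT.2.injOn (mem_cells.mpr hij) (mem_cells.mpr hlt) heq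
    exact j.lt_succ_self.ne (congrArg Prod.snd hcell)
  have hbelow : l.getD (i + 1) 0 ≤ j := by
    by_contra! hlt
    exact ((hT.1.2.1 i (i + 1) j i.lt_succ_self hlt).trans_le (hle hlt)).ne hTij
  exact ⟨i, j, hbelow.trans_lt hij, by omega, hTij⟩

theorem IsSYT.cell_eq_of_setEntry_eq {l : List ℕ} {T T' : ℕ → ℕ → ℕ} {i j i' j' v : ℕ}
    (hT : IsSYT l (setEntry T i j v)) (hc : (i, j) ∈ cells l) (hc' : (i', j') ∈ cells l)
    (h : setEntry T i j v = setEntry T' i' j' v) : (i, j) = (i', j') := by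
  refine hT.2.injOn hc hc' ?_
  calc setEntry T i j v i j = v := setEntry_self T i j v
    _ = setEntry T' i' j' v i' j' := (setEntry_self T' i' j' v).symm
    _ = setEntry T i j v i' j' := by rw [h]

theorem IsSYT.exists_eq_setEntry {l : List ℕ} (hl : l.Pairwise (· ≥ ·)) {T : ℕ → ℕ → ℕ}
    (hT : IsSYT l T) {n : ℕ} (hn : l.sum = n + 1) :
    ∃ i j, IsCornerRow l i ∧ l.getD i 0 = j + 1 ∧
      ∃ T', IsSYT (removeBox l i) T' ∧ setEntry T' i j n = T := by
  obtain ⟨i, j, hi, hj, rfl⟩ := hT.exists_isCornerRow hn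
  have hfill : setEntry (setEntry T i j 0) i j (T i j) = T := by
    rw [setEntry_setEntry, setEntry_eq_self]
  exact ⟨i, j, hi, hj, setEntry T i j 0,
    (isSYT_setEntry_iff hl hi hj hn (setEntry_self T i j 0)).mp (hfill.symm ▸ hT), hfill⟩

theorem fSYT_eq_sum_removeBox {l : List ℕ} (hl : l.Pairwise (· ≥ ·)) (h0 : l.sum ≠ 0)
    {S : Finset ℕ} (hS : ∀ i, i ∈ S ↔ IsCornerRow l i) :
    fSYT l = ∑ i ∈ S, fSYT (removeBox l i) := by
  obtain ⟨n, hn⟩ := Nat.exists_eq_succ_of_ne_zero h0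
  have hlen (i : S) : l.getD i 0 = l.getD i 0 - 1 + 1 :=
    (Nat.sub_add_cancel (Nat.zero_lt_of_lt ((hS i).mp i.2))).symm
  have hmem (i : S) : ((i : ℕ), l.getD i 0 - 1) ∈ cells l :=
    mem_cells.mpr ((Nat.lt_succ_self _).trans_eq (hlen i).symm)
  have hzero (i : S) {T : ℕ → ℕ → ℕ} (hT : IsSYT (removeBox l i) T) :
      T i (l.getD i 0 - 1) = 0 :=
    hT.1.2.2 _ _ (by rw [getD_removeBox, if_pos rfl])
  let insertMax (p : Σ i : S, {T // IsSYT (removeBox l i) T}) : {T // IsSYT l T} :=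
    ⟨setEntry p.2.1 p.1 (l.getD p.1 0 - 1) n,
      (isSYT_setEntry_iff hl ((hS _).mp p.1.2) (hlen p.1) hn (hzero p.1 p.2.2)).mpr p.2.2⟩
  have inj : Function.Injective insertMax := by
    rintro ⟨i, T, hT⟩ ⟨i', T', hT'⟩ h
    have hfill : setEntry T i _ n = setEntry T' i' _ n := congrArg Subtype.val h
    obtain rfl : i = i' := Subtype.ext <| congrArg Prod.fst <|
      (insertMax ⟨i, T, hT⟩).2.cell_eq_of_setEntry_eq (hmem i) (hmem i') hfill
    obtain rfl : T = T' := eq_of_setEntry_eq_setEntry ((hzero i hT).trans (hzero i hT').symm) hfill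
    rfl
  have surj : Function.Surjective insertMax := by
    rintro ⟨T, hT⟩
    obtain ⟨i, j, hi, hj, T', hT', hfill⟩ := hT.exists_eq_setEntry hl hn
    refine ⟨⟨⟨i, (hS i).mpr hi⟩, T', hT'⟩, Subtype.ext (Eq.trans ?_ hfill)⟩
    rw [← Nat.sub_eq_of_eq_add hj]
  have (i : S) := finite_isSYT (removeBox l i)
  simp only [fSYT_eq_card]
  rw [← Finset.sum_coe_sort, ← Nat.card_sigma]
  exact (Nat.card_eq_of_bijective insertMax ⟨inj, surj⟩).symm

theorem fSYT_append_zero (l : List ℕ) : fSYT (l ++ [0]) = fSYT l := by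
  have hget (i : ℕ) : (l ++ [0]).getD i 0 = l.getD i 0 := by
    simp only [List.getD_eq_getElem?_getD, List.getElem?_append]
    grind
  have hsum : (l ++ [0]).sum = l.sum := by simp
  simp only [fSYT_eq_card, IsSYT, IsSSYT, cells, hget, hsum]

theorem fSYT_nil : fSYT [] = 1 := by
  have hzero : IsSYT [] (fun _ _ ↦ 0) := by
    refine ⟨⟨by simp, by simp, by simp⟩, ?_⟩
    simp [cells]
  rw [fSYT_eq_card, Nat.card_eq_one_iff_exists]
  exact ⟨⟨_, hzero⟩, fun T ↦ Subtype.ext (by ext i j; exact T.2.1.2.2 i j (Nat.zero_le _))⟩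

/-- The hook partition `(a, 1^b)`. -/
abbrev hook (a b : ℕ) : List ℕ := a :: List.replicate b 1

/-- The partition `(a, 2, 1^b)`, the competitor of the hook `(a, 1^(b+2))`. -/
abbrev nearHook (a b : ℕ) : List ℕ := a :: 2 :: List.replicate b 1

theorem pairwise_ge_hook (a b : ℕ) : (hook (a + 1) b).Pairwise (· ≥ ·) := by
  simp [hook, List.pairwise_replicate]

theorem pairwise_ge_nearHook (a b : ℕ) : (nearHook (a + 2) b).Pairwise (· ≥ ·) := by
  simp [nearHook, List.pairwise_replicate]

theorem getD_hook (a b i : ℕ) :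
    (hook a b).getD i 0 = if i = 0 then a else if i ≤ b then 1 else 0 := by
  cases i with
  | zero => rfl
  | succ i =>
    rw [hook, List.getD_cons_succ, getD_replicate_zero]
    grind

theorem getD_nearHook (a b i : ℕ) :
    (nearHook a b).getD i 0 =
      if i = 0 then a else if i = 1 then 2 else if i ≤ b + 1 then 1 else 0 := by
  rcases i with _ | _ | i
  · rfl
  · rfl
  · rw [nearHook, List.getD_cons_succ, List.getD_cons_succ, getD_replicate_zero]
    grind

theorem removeBox_cons_succ (x : ℕ) (l : List ℕ) (i : ℕ) :
    removeBox (x :: l) (i + 1) = x :: removeBox l i := rfl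

theorem removeBox_replicate_one (b : ℕ) :
    removeBox (List.replicate (b + 1) 1) b = List.replicate b 1 ++ [0] := by
  induction b with
  | zero => rfl
  | succ b ih =>
    rw [List.replicate_succ, removeBox_cons_succ, ih]
    rfl

theorem fSYT_removeBox_hook (a b : ℕ) :
    fSYT (removeBox (hook a (b + 1)) (b + 1)) = fSYT (hook a b) := by
  rw [hook, removeBox_cons_succ, removeBox_replicate_one, ← List.cons_append, fSYT_append_zero]

theorem fSYT_removeBox_nearHook (a b : ℕ) :
    fSYT (removeBox (nearHook a (b + 1)) (b + 2)) = fSYT (nearHook a b) := by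
  rw [nearHook, removeBox_cons_succ, removeBox_cons_succ, removeBox_replicate_one,
    ← List.cons_append, ← List.cons_append, fSYT_append_zero]

theorem fSYT_hook_succ_succ (a b : ℕ) :
    fSYT (hook (a + 2) (b + 1)) = fSYT (hook (a + 1) (b + 1)) + fSYT (hook (a + 2) b) := by
  have hS (i : ℕ) : i ∈ ({0, b + 1} : Finset ℕ) ↔ IsCornerRow (hook (a + 2) (b + 1)) i := by
    simp only [IsCornerRow, getD_hook, Finset.mem_insert, Finset.mem_singleton]
    grind
  rw [fSYT_eq_sum_removeBox (pairwise_ge_hook _ _) (by simp) hS, Finset.sum_pair (by simp),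
    fSYT_removeBox_hook]
  rfl

theorem fSYT_hook_zero (a : ℕ) : fSYT (hook (a + 1) 0) = 1 := by
  have hS (a i : ℕ) : i ∈ ({0} : Finset ℕ) ↔ IsCornerRow (hook (a + 1) 0) i := by
    simp only [IsCornerRow, getD_hook, Finset.mem_singleton]
    grind
  induction a with
  | zero =>
    rw [fSYT_eq_sum_removeBox (pairwise_ge_hook _ _) (by simp) (hS _), Finset.sum_singleton]
    exact (fSYT_append_zero []).trans fSYT_nil
  | succ a ih =>
    rw [fSYT_eq_sum_removeBox (pairwise_ge_hook _ _) (by simp) (hS _), Finset.sum_singleton]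
    exact ih

theorem fSYT_hook_one (b : ℕ) : fSYT (hook 1 b) = 1 := by
  induction b with
  | zero => exact fSYT_hook_zero 0
  | succ b ih =>
    have hS (i : ℕ) : i ∈ ({b + 1} : Finset ℕ) ↔ IsCornerRow (hook 1 (b + 1)) i := by
      simp only [IsCornerRow, getD_hook, Finset.mem_singleton]
      grind
    rw [fSYT_eq_sum_removeBox (pairwise_ge_hook _ _) (by simp) hS, Finset.sum_singleton,
      fSYT_removeBox_hook, ih]

theorem fSYT_hook (a b : ℕ) : fSYT (hook (a + 1) b) = (a + b).choose b := by
  induction a generalizing b with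
  | zero => rw [fSYT_hook_one, zero_add, Nat.choose_self]
  | succ a iha =>
    induction b with
    | zero => rw [fSYT_hook_zero, Nat.choose_zero_right]
    | succ b ihb =>
      rw [fSYT_hook_succ_succ, iha, ihb, add_comm, show a + (b + 1) = a + 1 + b by omega]
      exact (Nat.choose_succ_succ' (a + 1 + b) b).symm

theorem fSYT_nearHook_succ_succ (a b : ℕ) :
    fSYT (nearHook (a + 3) (b + 1)) = fSYT (nearHook (a + 2) (b + 1)) +
      (fSYT (hook (a + 3) (b + 2)) + fSYT (nearHook (a + 3) b)) := by
  have hS (i : ℕ) : i ∈ ({0, 1, b + 2} : Finset ℕ) ↔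
      IsCornerRow (nearHook (a + 3) (b + 1)) i := by
    simp only [IsCornerRow, getD_nearHook, Finset.mem_insert, Finset.mem_singleton]
    grind
  rw [fSYT_eq_sum_removeBox (pairwise_ge_nearHook _ _) (by simp) hS,
    Finset.sum_insert (by simp), Finset.sum_pair (by simp), fSYT_removeBox_nearHook]
  rfl

theorem fSYT_nearHook_two_succ (b : ℕ) :
    fSYT (nearHook 2 (b + 1)) = fSYT (hook 2 (b + 2)) + fSYT (nearHook 2 b) := by
  have hS (i : ℕ) : i ∈ ({1, b + 2} : Finset ℕ) ↔ IsCornerRow (nearHook 2 (b + 1)) i := by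
    simp only [IsCornerRow, getD_nearHook, Finset.mem_insert, Finset.mem_singleton]
    grind
  rw [fSYT_eq_sum_removeBox (pairwise_ge_nearHook 0 _) (by simp) hS, Finset.sum_pair (by simp),
    fSYT_removeBox_nearHook]
  rfl

theorem fSYT_nearHook_succ_zero (a : ℕ) :
    fSYT (nearHook (a + 3) 0) = fSYT (nearHook (a + 2) 0) + fSYT (hook (a + 3) 1) := by
  have hS (i : ℕ) : i ∈ ({0, 1} : Finset ℕ) ↔ IsCornerRow (nearHook (a + 3) 0) i := by
    simp only [IsCornerRow, getD_nearHook, Finset.mem_insert, Finset.mem_singleton]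
    grind
  rw [fSYT_eq_sum_removeBox (pairwise_ge_nearHook _ _) (by simp) hS, Finset.sum_pair (by simp)]
  rfl

theorem fSYT_nearHook_two_zero : fSYT (nearHook 2 0) = fSYT (hook 2 1) := by
  have hS (i : ℕ) : i ∈ ({1} : Finset ℕ) ↔ IsCornerRow (nearHook 2 0) i := by
    simp only [IsCornerRow, getD_nearHook, Finset.mem_singleton]
    grind
  rw [fSYT_eq_sum_removeBox (pairwise_ge_nearHook 0 _) (by simp) hS, Finset.sum_singleton]
  rfl

theorem fSYT_nearHook_two_pos (b : ℕ) : 0 < fSYT (nearHook 2 b) := by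
  induction b with
  | zero => rw [fSYT_nearHook_two_zero, fSYT_hook]; exact Nat.choose_pos (Nat.le_add_left 1 1)
  | succ b ih => rw [fSYT_nearHook_two_succ]; exact Nat.add_pos_right _ ih

theorem fSYT_hook_le_fSYT_nearHook (a b : ℕ) :
    fSYT (hook (a + 2) (b + 3)) ≤ fSYT (nearHook (a + 2) (b + 1)) := by
  induction a with
  | zero =>
    calc fSYT (hook 2 (b + 3)) = fSYT (hook 2 (b + 2)) + 1 := by
          rw [fSYT_hook_succ_succ 0, fSYT_hook_one, add_comm]
      _ ≤ fSYT (hook 2 (b + 2)) + fSYT (nearHook 2 b) := by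
          gcongr
          exact fSYT_nearHook_two_pos b
      _ = fSYT (nearHook 2 (b + 1)) := (fSYT_nearHook_two_succ b).symm
  | succ a ih =>
    calc fSYT (hook (a + 3) (b + 3))
        = fSYT (hook (a + 2) (b + 3)) + fSYT (hook (a + 3) (b + 2)) := fSYT_hook_succ_succ _ _
      _ ≤ fSYT (nearHook (a + 2) (b + 1)) +
            (fSYT (hook (a + 3) (b + 2)) + fSYT (nearHook (a + 3) b)) :=
          add_le_add ih (Nat.le_add_right _ _)
      _ = fSYT (nearHook (a + 3) (b + 1)) := (fSYT_nearHook_succ_succ a b).symm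

theorem fSYT_nearHook_zero_lt_fSYT_hook_two (a : ℕ) :
    fSYT (nearHook (a + 2) 0) < fSYT (hook (a + 2) 2) := by
  induction a with
  | zero =>
    rw [fSYT_nearHook_two_zero, fSYT_hook, fSYT_hook]
    decide
  | succ a ih =>
    rw [fSYT_nearHook_succ_zero, fSYT_hook_succ_succ (a + 1) 1]
    exact Nat.add_lt_add_right ih _

theorem choose_lt_choose_of_lt_of_two_mul_le {n k l : ℕ} (hkl : k < l) (hl : 2 * l ≤ n) :
    n.choose k < n.choose l := by
  induction l, hkl using Nat.le_induction with
  | base =>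
    refine lt_of_mul_lt_mul_right ?_ (Nat.zero_le (k + 1))
    rw [Nat.choose_succ_right_eq]
    exact Nat.mul_lt_mul_of_pos_left (by omega) (Nat.choose_pos (by omega))
  | succ l _ ih =>
    exact (ih (by omega)).trans_le (Nat.choose_le_succ_of_lt_half_left (by omega))

theorem fSYT_hook_lt_fSYT_hook {a b c d : ℕ} (hn : a + b = c + d) (hdb : d < b)
    (hba : b < a) : fSYT (hook c d) < fSYT (hook a b) := by
  obtain ⟨a, rfl⟩ := Nat.exists_eq_succ_of_ne_zero (Nat.ne_zero_of_lt hba)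
  obtain ⟨c, rfl⟩ := Nat.exists_eq_succ_of_ne_zero (show c ≠ 0 by omega)
  rw [fSYT_hook, fSYT_hook, show c + d = a + b by omega]
  exact choose_lt_choose_of_lt_of_two_mul_le hdb (by omega)

theorem isPartitionOf_nearHook (a b : ℕ) :
    IsPartitionOf (a + 2 + (b + 2)) (nearHook (a + 2) b) := by
  refine ⟨pairwise_ge_nearHook a b, ?_, by simp; omega⟩
  simp only [List.mem_cons, List.mem_replicate]
  grind

theorem domLE_hook_nearHook (a b : ℕ) : DomLE (hook a (b + 2)) (nearHook a b) := by
  rintro (_ | _ | k)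
  · simp
  · simp
  · simp only [List.take_succ_cons, List.sum_cons, List.take_replicate, List.sum_replicate,
      smul_eq_mul, mul_one]
    omega

theorem eq_replicate_one_or_eq_two_of_sum_le_two {l : List ℕ} (hpos : ∀ x ∈ l, 0 < x)
    (hsum : l.sum ≤ 2) : l = List.replicate l.sum 1 ∨ l = [2] := by
  rcases l with _ | ⟨x, _ | ⟨y, _ | ⟨z, l⟩⟩⟩
  all_goals
    simp only [List.mem_cons, List.not_mem_nil, forall_eq_or_imp, List.sum_cons] at hpos hsum
  · exact Or.inl rfl
  · obtain rfl | rfl : x = 1 ∨ x = 2 := by grind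
    · exact Or.inl rfl
    · exact Or.inr rfl
  · obtain ⟨rfl, rfl⟩ : x = 1 ∧ y = 1 := by grind
    exact Or.inl rfl
  · omega

theorem eq_hook_or_eq_nearHook_of_domLE_hook {a b : ℕ} (ha : 0 < a) (hb : b ≤ 2) {m : List ℕ}
    (hm : IsPartitionOf (a + b) m) (hdom : DomLE (hook a b) m) :
    (∃ c d, m = hook c d ∧ d ≤ b ∧ a + b = c + d) ∨ (b = 2 ∧ m = nearHook a 0) := by
  obtain ⟨-, hpos, hsum⟩ := hm
  have hfirst := hdom 1
  rcases m with _ | ⟨x, t⟩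
  · exact absurd (Nat.eq_zero_of_add_eq_zero_right hsum.symm) ha.ne'
  simp only [List.take_succ_cons, List.take_zero, List.sum_cons] at hfirst hsum
  have htail : t.sum ≤ b := by omega
  rcases eq_replicate_one_or_eq_two_of_sum_le_two (fun y hy ↦ hpos y (List.mem_cons_of_mem x hy))
    (htail.trans hb) with ht | rfl
  · exact Or.inl ⟨x, t.sum, congrArg (x :: ·) ht, htail, hsum.symm⟩
  · have hb2 : b = 2 := hb.antisymm htail
    obtain rfl : x = a := by rw [List.sum_singleton] at hsum; omega
    exact Or.inr ⟨hb2, rfl⟩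

theorem stdMaximal_hook_of_le_two {a b : ℕ} (ha : 2 < a) (hb : b ≤ 2) :
    StdMaximal (a + b) (hook a b) := by
  rintro m hm hne ⟨hdom, hle⟩
  refine hle.not_gt ?_
  rcases eq_hook_or_eq_nearHook_of_domLE_hook (by omega) hb hm hdom with
    ⟨c, d, rfl, hd, hn⟩ | ⟨rfl, rfl⟩
  · rcases hd.eq_or_lt with rfl | hlt
    · exact absurd (by rw [Nat.add_right_cancel hn]) hne
    · exact fSYT_hook_lt_fSYT_hook hn hlt (by omega)
  · obtain ⟨c, rfl⟩ := Nat.exists_eq_add_of_le' ha.le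
    exact fSYT_nearHook_zero_lt_fSYT_hook_two c

theorem not_stdMaximal_hook (a b : ℕ) : ¬ StdMaximal (a + 2 + (b + 3)) (hook (a + 2) (b + 3)) :=
  fun h ↦ h (nearHook (a + 2) (b + 1)) (isPartitionOf_nearHook a (b + 1))
    (by simp [hook, nearHook, List.replicate_succ])
    ⟨domLE_hook_nearHook _ _, fSYT_hook_le_fSYT_nearHook a b⟩

/-- For `a > 2` and `b ≥ 1`, the hook `(a, 1^b)` is maximal in the
standard immersion poset on partitions of `a+b` if and only if `b ≤ 2`. -/
theorem std_maximal_hook (a b : ℕ) (ha : 2 < a) (hb : 1 ≤ b) :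
    StdMaximal (a + b) (a :: List.replicate b 1) ↔ b ≤ 2 := by
  refine ⟨fun h ↦ ?_, stdMaximal_hook_of_le_two ha⟩
  by_contra! hb3
  obtain ⟨c, rfl⟩ := Nat.exists_eq_add_of_le' ha.le
  obtain ⟨d, rfl⟩ := Nat.exists_eq_add_of_le' hb3
  exact not_stdMaximal_hook c d h
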